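/- Let p and q be positive integers and let π be a partition of [p+q] with exactly one (p,q)-connecting block B₀; write B₀' = B₀∩{1,...,p}, B₀'' = B₀∩{p+1,...,p+q}, let B₁',...,B_s' be the blocks of π contained in {1,...,p} and B₁'',...,B_t'' the blocks of π contained in {p+1,...,p+q}. Then π ∈ NC_ann(p,q) if and only if the partition {B₀', B₁', ..., B_s'} of {1,...,p} belongs to NC_disc({1,...,p}) and the partition {B₀'', B₁'', ..., B_t''} of {p+1,...,p+q} belongs to NC_disc({p+1,...,p+q}). -/

import Mathlib

/-- The permutation induced by `f` on the subset `B`: an element `b` is sent to the first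
element of the sequence `f b, f (f b), f (f (f b)), ...` that lies in `B`
(and is left fixed if no iterate ever returns to `B`). -/
noncomputable def induced {α : Type*} (f : α → α) (B : Set α) (b : α) : α := by
  classical
  exact if h : ∃ k, 0 < k ∧ f^[k] b ∈ B then f^[Nat.find h] b else b

/-- `A` is an orbit of the permutation `τ`. -/
def IsOrbit {α : Type*} (τ : Equiv.Perm α) (A : Set α) : Prop :=
  ∃ a, A = {b | τ.SameCycle a b}

/-- The number of orbits of `τ` (fixed points count as orbits). -/
noncomputable def numOrbits {α : Type*} (τ : Equiv.Perm α) : ℕ :=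
  Set.ncard {A : Set α | IsOrbit τ A}

/-- `induced f S` acts on `a, b, c` as the 3-cycle `(a, b, c)`. -/
def MapsCyc3 {α : Type*} (f : α → α) (S : Set α) (a b c : α) : Prop :=
  induced f S a = b ∧ induced f S b = c ∧ induced f S c = a

/-- `induced f S` acts on `a, b, c, d` as the 4-cycle `(a, b, c, d)`. -/
def MapsCyc4 {α : Type*} (f : α → α) (S : Set α) (a b c d : α) : Prop :=
  induced f S a = b ∧ induced f S b = c ∧ induced f S c = d ∧ induced f S d = a

/-- `induced f S` acts on `a, b, c, d` as the product of transpositions `(a, c)(b, d)`. -/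
def MapsSwap2 {α : Type*} (f : α → α) (S : Set α) (a b c d : α) : Prop :=
  induced f S a = c ∧ induced f S c = a ∧ induced f S b = d ∧ induced f S d = b

/-- `induced f S` acts on `x, y` as the transposition `(x, y)`. -/
def MapsSwap {α : Type*} (f : α → α) (S : Set α) (x y : α) : Prop :=
  induced f S x = y ∧ induced f S y = x

/-- `σ` is standard with respect to the "forward cycle" `γ₀`, i.e. `σ∣B = γ₀∣B` for
every orbit `B` of `σ`. -/
def DiscStandardRel {n : ℕ} (γ₀ σ : Equiv.Perm (Fin n)) : Prop :=
  ∀ A : Set (Fin n), IsOrbit σ A → ∀ b ∈ A, induced (⇑σ) A b = induced (⇑γ₀) A b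

/-- The orbit partition of `σ` has no crossing: there are no `a < b < c < d` with
`a, c` in one orbit and `b, d` in a different orbit. -/
def OrbitsNoCrossing {n : ℕ} (σ : Equiv.Perm (Fin n)) : Prop :=
  ¬ ∃ a b c d : Fin n, a < b ∧ b < c ∧ c < d ∧
      σ.SameCycle a c ∧ σ.SameCycle b d ∧ ¬ σ.SameCycle a b

/-- Disc non-crossing relative to a given forward cycle `γ₀`. -/
def DiscNCRel {n : ℕ} (γ₀ σ : Equiv.Perm (Fin n)) : Prop :=
  DiscStandardRel γ₀ σ ∧ OrbitsNoCrossing σ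

/-- The set `S_disc-nc(n)` of disc non-crossing permutations of `[n]`
(here `[n] = {1, …, n}` is modelled by `Fin n`, and the forward cycle
`γ₀ = (1, 2, …, n)` is `finRotate n`). -/
def DiscNC {n : ℕ} (σ : Equiv.Perm (Fin n)) : Prop :=
  DiscNCRel (finRotate n) σ

/-- The external points `{1, …, p}` (0-indexed: values `< p`). -/
def extSet (p q : ℕ) : Set (Fin (p + q)) := {i | (i : ℕ) < p}

/-- The internal points `{p+1, …, p+q}` (0-indexed: values `≥ p`). -/
def intSet (p q : ℕ) : Set (Fin (p + q)) := {i | p ≤ (i : ℕ)}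

/-- `γ_ext = (1, 2, …, p)`, the forward cycle on the external points. -/
def gammaExt (p q : ℕ) : Equiv.Perm (Fin (p + q)) :=
  ((List.finRange (p + q)).take p).formPerm

/-- `γ_int = (p+1, p+2, …, p+q)`, the forward cycle on the internal points. -/
def gammaInt (p q : ℕ) : Equiv.Perm (Fin (p + q)) :=
  ((List.finRange (p + q)).drop p).formPerm

/-- `γ = γ_ext · γ_int`. -/
def gammaAnn (p q : ℕ) : Equiv.Perm (Fin (p + q)) := gammaExt p q * gammaInt p q

/-- `λ_{x,y}`: the permutation fixing `x` and `y` and cycling the remaining points as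
`(γ_ext(x), γ_ext²(x), …, γ_ext^{p-1}(x), γ_int(y), γ_int²(y), …, γ_int^{q-1}(y))`. -/
def lamPerm (p q : ℕ) (x y : Fin (p + q)) : Equiv.Perm (Fin (p + q)) :=
  (((List.range (p - 1)).map fun k => (gammaExt p q ^ (k + 1)) x) ++
    ((List.range (q - 1)).map fun k => (gammaInt p q ^ (k + 1)) y)).formPerm

/-- `τ` is standard in `(p,q)`-annular sense. -/
def AnnStandard (p q : ℕ) (τ : Equiv.Perm (Fin (p + q))) : Prop :=
  (∀ A : Set (Fin (p + q)), IsOrbit τ A →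
    (∀ b ∈ A ∩ extSet p q,
        induced (⇑τ) (A ∩ extSet p q) b = induced (⇑(gammaExt p q)) (A ∩ extSet p q) b) ∧
    (∀ b ∈ A ∩ intSet p q,
        induced (⇑τ) (A ∩ intSet p q) b = induced (⇑(gammaInt p q)) (A ∩ intSet p q) b)) ∧
  (∀ A : Set (Fin (p + q)), IsOrbit τ A →
    (A ∩ extSet p q).Nonempty → (A ∩ intSet p q).Nonempty →
    (∃! a, a ∈ A ∩ extSet p q ∧ τ a ∈ intSet p q) ∧
    (∃! a, a ∈ A ∩ intSet p q ∧ τ a ∈ extSet p q))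

/-- The annular crossing pattern (AC-1). -/
def AC1 (p q : ℕ) (τ : Equiv.Perm (Fin (p + q))) : Prop :=
  ∃ a b c d : Fin (p + q), List.Pairwise (· ≠ ·) [a, b, c, d] ∧
    MapsCyc4 (⇑(gammaAnn p q)) {a, b, c, d} a b c d ∧
    MapsSwap2 (⇑τ) {a, b, c, d} a b c d

/-- The annular crossing pattern (AC-2). -/
def AC2 (p q : ℕ) (τ : Equiv.Perm (Fin (p + q))) : Prop :=
  ∃ a b c x y : Fin (p + q), List.Pairwise (· ≠ ·) [a, b, c, x, y] ∧
    x ∈ extSet p q ∧ y ∈ intSet p q ∧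
    MapsCyc3 (⇑(lamPerm p q x y)) {a, b, c} a b c ∧
    MapsCyc3 (⇑τ) {a, b, c, x, y} a c b ∧
    MapsSwap (⇑τ) {a, b, c, x, y} x y

/-- The annular crossing pattern (AC-3). -/
def AC3 (p q : ℕ) (τ : Equiv.Perm (Fin (p + q))) : Prop :=
  ∃ a b c d x y : Fin (p + q), List.Pairwise (· ≠ ·) [a, b, c, d, x, y] ∧
    x ∈ extSet p q ∧ y ∈ intSet p q ∧
    MapsCyc4 (⇑(lamPerm p q x y)) {a, b, c, d} a b c d ∧
    MapsSwap2 (⇑τ) {a, b, c, d, x, y} a b c d ∧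
    MapsSwap (⇑τ) {a, b, c, d, x, y} x y

/-- The set `S_ann-nc(p,q)` of `(p,q)`-annular non-crossing permutations. -/
def AnnNC (p q : ℕ) (τ : Equiv.Perm (Fin (p + q))) : Prop :=
  AnnStandard p q τ ∧ ¬ AC1 p q τ ∧ ¬ AC2 p q τ ∧ ¬ AC3 p q τ

/-- A `(p,q)`-connecting set: meets both the external and internal points. -/
def ConnectingBlock (p q : ℕ) (B : Set (Fin (p + q))) : Prop :=
  (B ∩ extSet p q).Nonempty ∧ (B ∩ intSet p q).Nonempty

/-- `τ` is `(p,q)`-connected: it has a `(p,q)`-connecting orbit. -/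
def AnnConnected (p q : ℕ) (τ : Equiv.Perm (Fin (p + q))) : Prop :=
  ∃ A : Set (Fin (p + q)), IsOrbit τ A ∧ ConnectingBlock p q A

/-- A family of blocks has no crossing: no `a < b < c < d` with `a, c` in one block and
`b, d` in a different block. -/
def NoCrossing {n : ℕ} (ρ : Set (Set (Fin n))) : Prop :=
  ¬ ∃ (a b c d : Fin n) (B C : Set (Fin n)), B ∈ ρ ∧ C ∈ ρ ∧ B ≠ C ∧
      a < b ∧ b < c ∧ c < d ∧ a ∈ B ∧ c ∈ B ∧ b ∈ C ∧ d ∈ C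

/-- `c` is the cyclic successor of `b` in `S`, with respect to the rank function `r`. -/
def IsNext {α : Type*} (r : α → ℕ) (S : Set α) (b c : α) : Prop :=
  c ∈ S ∧ ((r b < r c ∧ ∀ x ∈ S, r b < r x → r c ≤ r x) ∨
    ((∀ x ∈ S, r x ≤ r b) ∧ ∀ x ∈ S, r c ≤ r x))

lemma IsNext.unique {α : Type*} {r : α → ℕ} {S : Set α} (hr : Set.InjOn r S) {b c c' : α}
    (h : IsNext r S b c) (h' : IsNext r S b c') : c = c' := by
  obtain ⟨hc, h⟩ := h
  obtain ⟨hc', h'⟩ := h'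
  apply hr hc hc'
  rcases h with ⟨h1, h2⟩ | ⟨h1, h2⟩ <;> rcases h' with ⟨h3, h4⟩ | ⟨h3, h4⟩
  · exact le_antisymm (h2 _ hc' h3) (h4 _ hc h1)
  · have := h3 _ hc; omega
  · have := h1 _ hc'; omega
  · exact le_antisymm (h2 _ hc') (h4 _ hc)

lemma exists_return {α : Type*} [Finite α] (σ : Equiv.Perm α) {S : Set α} {b : α} (hb : b ∈ S) :
    ∃ k, 0 < k ∧ (⇑σ)^[k] b ∈ S := by
  refine ⟨orderOf σ, orderOf_pos σ, ?_⟩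
  rw [Equiv.Perm.iterate_eq_pow, pow_orderOf_eq_one]
  exact hb

lemma induced_spec {α : Type*} [Finite α] (σ : Equiv.Perm α) {S : Set α} {b : α} (hb : b ∈ S) :
    ∃ k, 0 < k ∧ induced (⇑σ) S b = (⇑σ)^[k] b ∧ (⇑σ)^[k] b ∈ S ∧
      ∀ j, 0 < j → j < k → (⇑σ)^[j] b ∉ S := by
  classical
  have h := exists_return σ hb
  refine ⟨Nat.find h, (Nat.find_spec h).1, ?_, (Nat.find_spec h).2, ?_⟩
  · unfold induced
    rw [dif_pos h]
  · intro j hj hjk hS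
    exact Nat.find_min h hjk ⟨hj, hS⟩

lemma induced_isNext {α : Type*} [Finite α] (σ : Equiv.Perm α) (r : α → ℕ) (U S : Set α)
    (hr : Set.InjOn r U) (hU : ∀ i ∈ U, IsNext r U i (σ i)) {b : α} (hb : b ∈ S) (hbU : b ∈ U) :
    IsNext r (S ∩ U) b (induced (⇑σ) S b) := by
  obtain ⟨k, hk, he, hkS, hmin⟩ := induced_spec σ hb
  have hmem : ∀ j, (⇑σ)^[j] b ∈ U := by
    intro j
    induction j with
    | zero => exact hbU
    | succ j ih => rw [Function.iterate_succ_apply']; exact (hU _ ih).1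
  have key : ∀ j, j + 1 ≤ k → ((r b < r ((⇑σ)^[j+1] b) ∧
      ∀ x ∈ S ∩ U, r b < r x → r ((⇑σ)^[j+1] b) ≤ r x) ∨
      ((∀ x ∈ S ∩ U, r x ≤ r b) ∧ ∀ x ∈ S ∩ U, r ((⇑σ)^[j+1] b) ≤ r x)) := by
    intro j
    induction j with
    | zero =>
      intro _
      simp only [zero_add, Function.iterate_one]
      rcases (hU b hbU).2 with ⟨h1, h2⟩ | ⟨h1, h2⟩
      · exact Or.inl ⟨h1, fun x hx => h2 x hx.2⟩
      · exact Or.inr ⟨fun x hx => h1 x hx.2, fun x hx => h2 x hx.2⟩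
    | succ j ih =>
      intro hj
      have ih := ih (by omega)
      rw [Function.iterate_succ_apply' _ (j+1)]
      set u := (⇑σ)^[j+1] b with hu
      have huS : u ∉ S := hmin (j+1) (by omega) (by omega)
      have huU : u ∈ U := hmem (j+1)
      have hne : ∀ x ∈ S ∩ U, r x ≠ r u := by
        intro x hx hxu
        have := hr hx.2 huU hxu
        exact huS (this ▸ hx.1)
      rcases (hU u huU).2 with ⟨h1, h2⟩ | ⟨h1, h2⟩
      · rcases ih with ⟨h3, h4⟩ | ⟨h3, h4⟩
        · refine Or.inl ⟨by omega, fun x hx hbx => h2 x hx.2 ?_⟩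
          have := h4 x hx hbx
          have := hne x hx
          omega
        · refine Or.inr ⟨h3, fun x hx => h2 x hx.2 ?_⟩
          have := h4 x hx
          have := hne x hx
          omega
      · refine Or.inr ⟨fun x hx => ?_, fun x hx => h2 x hx.2⟩
        rcases ih with ⟨h3, h4⟩ | ⟨h3, h4⟩
        · by_contra hlt
          have := h4 x hx (by omega)
          have := hne x hx
          have := h1 x hx.2
          omega
        · exact h3 x hx
  rw [he]
  refine ⟨⟨hkS, hmem k⟩, ?_⟩
  have := key (k-1) (by omega)
  rwa [Nat.sub_add_cancel hk] at this

lemma induced_sameCycle {α : Type*} [Finite α] (σ : Equiv.Perm α) {S : Set α} {b : α}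
    (hb : b ∈ S) : σ.SameCycle b (induced (⇑σ) S b) := by
  obtain ⟨k, hk, he, hkS, hmin⟩ := induced_spec σ hb
  rw [he, Equiv.Perm.iterate_eq_pow]
  exact ⟨k, by simp⟩

lemma induced_mem {α : Type*} [Finite α] (σ : Equiv.Perm α) {S : Set α} {b : α}
    (hb : b ∈ S) : induced (⇑σ) S b ∈ S := by
  obtain ⟨k, hk, he, hkS, hmin⟩ := induced_spec σ hb
  rw [he]; exact hkS

lemma induced_closure {α : Type*} [Finite α] (σ : Equiv.Perm α) {S T : Set α} (hTS : T ⊆ S)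
    (hT : ∀ z ∈ T, induced (⇑σ) S z ∈ T) {a b : α} (ha : a ∈ T) (hb : b ∈ S)
    (hab : σ.SameCycle a b) : b ∈ T := by
  obtain ⟨n, hn⟩ := hab.exists_nat_pow_eq
  rw [← Equiv.Perm.iterate_eq_pow] at hn
  clear hab
  induction n using Nat.strong_induction_on generalizing a with
  | _ n ih =>
    obtain ⟨k, hk, he, hkS, hmin⟩ := induced_spec σ (hTS ha)
    rcases Nat.eq_zero_or_pos n with h0 | h0
    · subst h0
      simp at hn
      exact hn ▸ ha
    · have hkn : k ≤ n := by
        by_contra hlt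
        exact hmin n h0 (by omega) (hn ▸ hb)
      refine ih (n - k) (by omega) (hT a ha) ?_
      rw [he, ← Function.iterate_add_apply, Nat.sub_add_cancel hkn, hn]

lemma induced_pair {α : Type*} [Finite α] (σ : Equiv.Perm α) {S : Set α} {a c : α}
    (ha : a ∈ S) (hc : c ∈ S) (hac : a ≠ c) (h : σ.SameCycle a c)
    (hS : ∀ z ∈ S, σ.SameCycle a z → z = a ∨ z = c) : induced (⇑σ) S a = c := by
  rcases hS _ (induced_mem σ ha) (induced_sameCycle σ ha) with h1 | h1
  · exfalso
    have := induced_closure σ (S := S) (T := {a}) (by simpa using ha) (by simp [h1])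
      (Set.mem_singleton a) hc h
    exact hac (by simpa using this.symm)
  · exact h1

lemma formPerm_isNext {α : Type*} [DecidableEq α] (L : List α) (r : α → ℕ) (s : ℕ)
    (hr : ∀ i (h : i < L.length), r L[i] = i + s) (z : α) (hz : z ∈ L) :
    IsNext r {w | w ∈ L} z (L.formPerm z) := by
  have hnd : L.Nodup := by
    rw [List.nodup_iff_injective_getElem]
    intro i j hij
    have h1 := hr i i.2
    have h2 := hr j j.2
    simp only at hij
    rw [hij] at h1
    ext; omega
  obtain ⟨i, hi, rfl⟩ := List.getElem_of_mem hz
  rw [List.formPerm_apply_getElem L hnd i hi]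
  refine ⟨List.getElem_mem _, ?_⟩
  have hall : ∀ x ∈ {w | w ∈ L}, ∃ j, j < L.length ∧ r x = j + s := by
    intro x hx
    obtain ⟨j, hj, rfl⟩ := List.getElem_of_mem hx
    exact ⟨j, hj, hr j hj⟩
  rw [hr, hr]
  by_cases h : i + 1 < L.length
  · left
    rw [Nat.mod_eq_of_lt h]
    refine ⟨by omega, fun x hx => ?_⟩
    obtain ⟨j, hj, e⟩ := hall x hx
    omega
  · right
    have : i + 1 = L.length := by omega
    rw [this, Nat.mod_self]
    refine ⟨fun x hx => ?_, fun x hx => ?_⟩ <;>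
    · obtain ⟨j, hj, e⟩ := hall x hx
      omega

/-- value rank -/
def vr {n : ℕ} (i : Fin n) : ℕ := i

lemma vr_inj {n : ℕ} (S : Set (Fin n)) : Set.InjOn vr S := fun _ _ _ _ h => Fin.ext h

lemma mem_take_iff (p q : ℕ) (z : Fin (p + q)) :
    z ∈ (List.finRange (p + q)).take p ↔ z ∈ extSet p q := by
  rw [List.mem_take_iff_getElem]
  simp only [extSet, Set.mem_ofPred_eq, List.getElem_finRange, List.length_finRange]
  constructor
  · rintro ⟨j, hj, rfl⟩
    simp; omega
  · intro h
    exact ⟨z, by omega, by ext; simp⟩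

lemma mem_drop_iff (p q : ℕ) (z : Fin (p + q)) :
    z ∈ (List.finRange (p + q)).drop p ↔ z ∈ intSet p q := by
  rw [List.mem_drop_iff_getElem]
  simp only [intSet, Set.mem_ofPred_eq, List.getElem_finRange, List.length_finRange]
  constructor
  · rintro ⟨j, hj, rfl⟩
    simp
  · intro h
    exact ⟨z - p, by omega, by ext; simp; omega⟩

lemma gammaExt_next (p q : ℕ) (z : Fin (p + q)) (hz : z ∈ extSet p q) :
    IsNext vr (extSet p q) z (gammaExt p q z) := by
  have := formPerm_isNext ((List.finRange (p + q)).take p) vr 0 (by intro i h; simp [vr]) z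
    ((mem_take_iff p q z).2 hz)
  simp only [mem_take_iff] at this
  exact this

lemma gammaInt_next (p q : ℕ) (z : Fin (p + q)) (hz : z ∈ intSet p q) :
    IsNext vr (intSet p q) z (gammaInt p q z) := by
  have := formPerm_isNext ((List.finRange (p + q)).drop p) vr p
    (by intro i h; simp [vr]; omega) z ((mem_drop_iff p q z).2 hz)
  simp only [mem_drop_iff] at this
  exact this

lemma int_of_not_ext {p q : ℕ} {z : Fin (p + q)} : z ∉ extSet p q ↔ z ∈ intSet p q := by
  simp [extSet, intSet]

lemma gammaAnn_ext (p q : ℕ) (z : Fin (p + q)) (hz : z ∈ extSet p q) :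
    IsNext vr (extSet p q) z (gammaAnn p q z) := by
  have : gammaInt p q z = z := by
    apply List.formPerm_apply_of_notMem
    rw [mem_drop_iff, ← int_of_not_ext]
    exact not_not.2 hz
  rw [gammaAnn, Equiv.Perm.mul_apply, this]
  exact gammaExt_next p q z hz

lemma gammaAnn_int (p q : ℕ) (z : Fin (p + q)) (hz : z ∈ intSet p q) :
    IsNext vr (intSet p q) z (gammaAnn p q z) := by
  have h := gammaInt_next p q z hz
  have : gammaExt p q (gammaInt p q z) = gammaInt p q z := by
    apply List.formPerm_apply_of_notMem
    rw [mem_take_iff, int_of_not_ext]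
    exact h.1
  rw [gammaAnn, Equiv.Perm.mul_apply, this]
  exact h

lemma next_val_ext {p q : ℕ} (z : Fin (p + q)) (hz : z ∈ extSet p q) :
    ((gammaExt p q z : Fin (p + q)) : ℕ) = (z + 1) % p := by
  obtain ⟨h0, h⟩ := gammaExt_next p q z hz
  simp only [extSet, Set.mem_ofPred_eq, vr] at *
  rcases h with ⟨h1, h2⟩ | ⟨h1, h2⟩
  · have := h2 ⟨z + 1, by omega⟩ (by simp; omega) (by simp)
    simp only at this
    rw [Nat.mod_eq_of_lt] <;> omega
  · have a := h1 ⟨p - 1, by omega⟩ (by simp; omega)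
    have b := h2 ⟨0, by omega⟩ (by simp; omega)
    simp only at a b
    have : (z : ℕ) + 1 = p := by omega
    rw [this, Nat.mod_self]; omega

lemma next_val_int {p q : ℕ} (z : Fin (p + q)) (hz : z ∈ intSet p q) :
    ((gammaInt p q z : Fin (p + q)) : ℕ) = p + (z - p + 1) % q := by
  obtain ⟨h0, h⟩ := gammaInt_next p q z hz
  simp only [intSet, Set.mem_ofPred_eq, vr] at *
  rcases h with ⟨h1, h2⟩ | ⟨h1, h2⟩
  · have := h2 ⟨z + 1, by omega⟩ (by simp; omega) (by simp)
    simp only at this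
    rw [Nat.mod_eq_of_lt] <;> omega
  · have a := h1 ⟨p + q - 1, by omega⟩ (by simp; omega)
    have b := h2 ⟨p, by omega⟩ (by simp)
    simp only at a b
    have : (z : ℕ) - p + 1 = q := by omega
    rw [this, Nat.mod_self]; omega

lemma pow_val_ext {p q : ℕ} (z : Fin (p + q)) (hz : z ∈ extSet p q) (k : ℕ) :
    (((gammaExt p q ^ k) z : Fin (p + q)) : ℕ) = (z + k) % p := by
  have hz' : (z : ℕ) < p := hz
  induction k with
  | zero => simp [Nat.mod_eq_of_lt hz']
  | succ k ih =>
    rw [pow_succ', Equiv.Perm.mul_apply, next_val_ext, ih]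
    · rw [Nat.mod_add_mod]; rfl
    · simp only [extSet, Set.mem_ofPred_eq, ih]
      exact Nat.mod_lt _ (by omega)

lemma pow_val_int {p q : ℕ} (z : Fin (p + q)) (hz : z ∈ intSet p q) (k : ℕ) :
    (((gammaInt p q ^ k) z : Fin (p + q)) : ℕ) = p + (z - p + k) % q := by
  have hz' : p ≤ (z : ℕ) := hz
  induction k with
  | zero => rw [Nat.mod_eq_of_lt (by omega)]; simp; omega
  | succ k ih =>
    rw [pow_succ', Equiv.Perm.mul_apply, next_val_int, ih]
    · rw [Nat.add_sub_cancel_left, Nat.mod_add_mod]; rfl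
    · simp only [intSet, Set.mem_ofPred_eq, ih]
      omega

/-- the rank function of the cycle `λ_{x,y}` -/
def lamRank (p q : ℕ) (x y z : Fin (p + q)) : ℕ :=
  if (z : ℕ) < p then (if x < z then (z : ℕ) - x - 1 else (z : ℕ) + p - x - 1)
  else if y < z then p - 1 + (z - y - 1) else p - 1 + (z + q - y - 1)

lemma lamRank_inj {p q : ℕ} {x y : Fin (p + q)} (hx : x ∈ extSet p q) (hy : y ∈ intSet p q) :
    Set.InjOn (lamRank p q x y) {z | z ≠ x ∧ z ≠ y} := by
  rintro a ⟨ha1, ha2⟩ b ⟨hb1, hb2⟩ h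
  simp only [extSet, intSet, Set.mem_ofPred_eq] at hx hy
  simp only [lamRank, Fin.lt_def] at h
  ext
  rw [Ne, Fin.ext_iff] at *
  split_ifs at h <;> omega

lemma lam_next {p q : ℕ} {x y : Fin (p + q)} (hx : x ∈ extSet p q) (hy : y ∈ intSet p q)
    (z : Fin (p + q)) (hz : z ∈ {z | z ≠ x ∧ z ≠ y}) :
    IsNext (lamRank p q x y) {z | z ≠ x ∧ z ≠ y} z (lamPerm p q x y z) := by
  have hx' : (x : ℕ) < p := hx
  have hy' : p ≤ (y : ℕ) := hy
  set L := (((List.range (p - 1)).map fun k => (gammaExt p q ^ (k + 1)) x) ++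
    ((List.range (q - 1)).map fun k => (gammaInt p q ^ (k + 1)) y)) with hL
  have hmod : ∀ u m : ℕ, u < m → ∀ k, k < m → (u + k) % m = if u + k < m then u + k
      else u + k - m := by
    intro u m hu k hk
    split_ifs with h
    · exact Nat.mod_eq_of_lt h
    · rw [Nat.mod_eq_sub_mod (by omega), Nat.mod_eq_of_lt (by omega)]
  have hmem : {w | w ∈ L} = {z | z ≠ x ∧ z ≠ y} := by
    ext w
    simp only [hL, Set.mem_ofPred_eq, List.mem_append, List.mem_map, List.mem_range]
    constructor
    · rintro (⟨k, hk, rfl⟩ | ⟨k, hk, rfl⟩)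
      · rw [Ne, Ne, Fin.ext_iff, Fin.ext_iff, pow_val_ext x hx,
          hmod _ _ hx' _ (by omega)]
        split_ifs <;> omega
      · rw [Ne, Ne, Fin.ext_iff, Fin.ext_iff, pow_val_int y hy,
          hmod _ _ (by omega) _ (by omega)]
        split_ifs <;> omega
    · rintro ⟨h1, h2⟩
      rw [Ne, Fin.ext_iff] at h1 h2
      by_cases hw : (w : ℕ) < p
      · left
        by_cases h : (x : ℕ) < w
        · refine ⟨w - x - 1, by omega, ?_⟩
          rw [Fin.ext_iff, pow_val_ext x hx, hmod _ _ hx' _ (by omega)]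
          split_ifs <;> omega
        · refine ⟨w + p - x - 1, by omega, ?_⟩
          rw [Fin.ext_iff, pow_val_ext x hx, hmod _ _ hx' _ (by omega)]
          split_ifs <;> omega
      · right
        by_cases h : (y : ℕ) < w
        · refine ⟨w - y - 1, by omega, ?_⟩
          rw [Fin.ext_iff, pow_val_int y hy, hmod _ _ (by omega) _ (by omega)]
          split_ifs <;> omega
        · refine ⟨w + q - y - 1, by omega, ?_⟩
          rw [Fin.ext_iff, pow_val_int y hy, hmod _ _ (by omega) _ (by omega)]
          split_ifs <;> omega
  have := formPerm_isNext L (lamRank p q x y) 0 ?_ z (by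
    have : z ∈ {w | w ∈ L} := hmem ▸ hz
    exact this)
  · rw [hmem] at this
    exact this
  · intro i hi
    have hlen : L.length = p - 1 + (q - 1) := by simp [hL]
    simp only [hL, List.getElem_append, List.length_map, List.length_range, List.getElem_map,
      List.getElem_range]
    split_ifs with h
    · have e := pow_val_ext x hx (i + 1)
      rw [hmod _ _ hx' _ (by omega)] at e
      simp only [lamRank, Fin.lt_def, e]
      split_ifs <;> omega
    · have e := pow_val_int y hy (i - (p - 1) + 1)
      rw [hmod _ _ (by omega) _ (by omega)] at e
      simp only [lamRank, Fin.lt_def, e]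
      split_ifs <;> omega

/-- cyclic order of three numbers -/
def Cyc3 (a b c : ℕ) : Prop := (a < b ∧ b < c) ∨ (b < c ∧ c < a) ∨ (c < a ∧ a < b)

/-- cyclic order of four numbers -/
def Cyc4 (a b c d : ℕ) : Prop := (a < b ∧ b < c ∧ c < d) ∨ (b < c ∧ c < d ∧ d < a) ∨
  (c < d ∧ d < a ∧ a < b) ∨ (d < a ∧ a < b ∧ b < c)

lemma IsNext.facts {α : Type*} {r : α → ℕ} {S : Set α} {b c : α} (h : IsNext r S b c) {x : α}
    (hx : x ∈ S) :
    (r b < r c ∧ (r x ≤ r b ∨ r c ≤ r x)) ∨ (r c ≤ r b ∧ r x ≤ r b ∧ r c ≤ r x) := by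
  rcases h with ⟨hc, ⟨h1, h2⟩ | ⟨h1, h2⟩⟩
  · have := h2 x hx; omega
  · have := h1 x hx; have := h2 x hx; have := h1 c hc; omega

lemma cyc3_of {α : Type*} {r : α → ℕ} {S : Set α} (hr : Set.InjOn r S) {a b c : α}
    (ha : a ∈ S) (hb : b ∈ S) (hc : c ∈ S) (hab : a ≠ b) (hac : a ≠ c) (hbc : b ≠ c)
    (h1 : IsNext r S a b) (h2 : IsNext r S b c) : Cyc3 (r a) (r b) (r c) := by
  have e1 := hr.ne ha hb hab
  have e2 := hr.ne ha hc hac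
  have e3 := hr.ne hb hc hbc
  have f1 := h1.facts hc
  have f2 := h2.facts ha
  unfold Cyc3
  omega

lemma cyc4_of {α : Type*} {r : α → ℕ} {S : Set α} (hr : Set.InjOn r S) {a b c d : α}
    (ha : a ∈ S) (hb : b ∈ S) (hc : c ∈ S) (hd : d ∈ S) (hab : a ≠ b) (hac : a ≠ c) (had : a ≠ d)
    (hbc : b ≠ c) (hbd : b ≠ d) (hcd : c ≠ d)
    (h1 : IsNext r S a b) (h2 : IsNext r S b c) (h3 : IsNext r S c d) :
    Cyc4 (r a) (r b) (r c) (r d) := by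
  have e1 := hr.ne ha hb hab
  have e2 := hr.ne ha hc hac
  have e3 := hr.ne hb hc hbc
  have e4 := hr.ne ha hd had
  have e5 := hr.ne hb hd hbd
  have e6 := hr.ne hc hd hcd
  have f1 := h1.facts hc
  have f1' := h1.facts hd
  have f2 := h2.facts ha
  have f2' := h2.facts hd
  have f3 := h3.facts ha
  have f3' := h3.facts hb
  unfold Cyc4
  omega

lemma exists_next {n : ℕ} (S : Set (Fin n)) (i : Fin n) (hi : i ∈ S) : ∃ c, IsNext vr S i c := by
  classical
  by_cases h : ∃ c ∈ S, i < c
  · obtain ⟨c, ⟨hc, hic⟩, hmin⟩ := WellFounded.has_min (wellFounded_lt (α := Fin n))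
      {c | c ∈ S ∧ i < c} h
    exact ⟨c, hc, Or.inl ⟨hic, fun x hx hix => not_lt.1 (hmin x ⟨hx, hix⟩)⟩⟩
  · push Not at h
    obtain ⟨c, hc, hmin⟩ := WellFounded.has_min (wellFounded_lt (α := Fin n)) S ⟨i, hi⟩
    exact ⟨c, hc, Or.inr ⟨h, fun x hx => not_lt.1 (hmin x hx)⟩⟩

lemma exists_max {n : ℕ} (S : Set (Fin n)) (hS : S.Nonempty) : ∃ c ∈ S, ∀ x ∈ S, x ≤ c := by
  obtain ⟨c, hc, hmin⟩ := WellFounded.has_min (wellFounded_gt (α := Fin n)) S hS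
  exact ⟨c, hc, fun x hx => not_lt.1 (hmin x hx)⟩

lemma exists_tau {n : ℕ} (s : Setoid (Fin n)) : ∃ τ : Equiv.Perm (Fin n),
    (∀ i, IsNext vr {j | s i j} i (τ i)) ∧ ∀ i j, τ.SameCycle i j ↔ s i j := by
  have hex : ∀ i, ∃ c, IsNext vr {j | s i j} i c := fun i => exists_next _ i (s.refl i)
  choose f hf using hex
  have hcls : ∀ i j, s i j → {k | s i k} = {k | s j k} := by
    intro i j hij
    ext k
    exact ⟨fun h => s.trans (s.symm hij) h, fun h => s.trans hij h⟩
  have hinj : Function.Injective f := by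
    intro i j hij
    have h1 := hf i
    have h2 := hf j
    have hsij : s i j := by
      have a : s i (f i) := h1.1
      have b : s j (f j) := h2.1
      rw [hij] at a
      exact s.trans a (s.symm b)
    rw [← hcls i j hsij, ← hij] at h2
    have hi : i ∈ {k | s i k} := s.refl i
    have hj : j ∈ {k | s i k} := hsij
    have g1 := h1.facts hj
    have g2 := h2.facts hi
    simp only [vr] at g1 g2
    ext
    omega
  let τ : Equiv.Perm (Fin n) := Equiv.ofBijective f (Finite.injective_iff_bijective.1 hinj)
  have hτ : ∀ i, τ i = f i := fun i => rfl
  refine ⟨τ, fun i => hf i, fun i j => ⟨?_, ?_⟩⟩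
  · rintro ⟨k, rfl⟩
    have hst : ∀ z, s z (τ z) := fun z => (hf z).1
    induction k using Int.induction_on with
    | zero => exact s.refl i
    | succ k ih =>
      rw [add_comm, zpow_add, zpow_one, Equiv.Perm.mul_apply]
      exact s.trans ih (hst _)
    | pred k ih =>
      have := hst ((τ ^ (-(k : ℤ) - 1)) i)
      rw [← Equiv.Perm.mul_apply, ← zpow_one_add] at this
      rw [show 1 + (-(k : ℤ) - 1) = -k by ring] at this
      exact s.trans ih (s.symm this)
  · have main : ∀ m : ℕ, ∀ i : Fin n, n - i ≤ m →
        ∃ c, s i c ∧ τ.SameCycle i c ∧ ∀ x, s i x → c ≤ x := by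
      intro m
      induction m with
      | zero => intro i hi; omega
      | succ m ih =>
        intro i hi
        obtain ⟨hc, ⟨h1, h2⟩ | ⟨h1, h2⟩⟩ := hf i
        · simp only [vr] at h1
          obtain ⟨c, hc1, hc2, hc3⟩ := ih (f i) (by omega)
          refine ⟨c, s.trans hc hc1, ?_, fun x hx => hc3 x (s.trans (s.symm hc) hx)⟩
          rw [← hτ] at hc2
          exact Equiv.Perm.sameCycle_apply_left.1 hc2
        · refine ⟨f i, hc, ?_, fun x hx => h2 x hx⟩
          rw [← hτ]
          exact Equiv.Perm.sameCycle_apply_right.2 (Equiv.Perm.SameCycle.refl _ _)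
    intro hij
    obtain ⟨c, hc1, hc2, hc3⟩ := main n i (by omega)
    obtain ⟨d, hd1, hd2, hd3⟩ := main n j (by omega)
    have : c = d := le_antisymm (hc3 d (s.trans hij hd1)) (hd3 c (s.trans (s.symm hij) hc1))
    subst this
    exact hc2.trans hd2.symm

/-- crossing criterion on one side of the annulus -/
lemma noCrossing_iff {n : ℕ} {π : Set (Set (Fin n))} (hpart : Setoid.IsPartition π)
    (s : Setoid (Fin n)) (hs : ∀ i, {j | s i j} ∈ π)
    (B₀ E : Set (Fin n)) (hB₀ : B₀ ∈ π)
    (hE : ∀ B ∈ π, (B ∩ E).Nonempty → B = B₀ ∨ B ⊆ E) :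
    NoCrossing (insert (B₀ ∩ E) {B | B ∈ π ∧ B ⊆ E}) ↔
      ¬ ∃ a b c d : Fin n, a ∈ E ∧ b ∈ E ∧ c ∈ E ∧ d ∈ E ∧ a < b ∧ b < c ∧ c < d ∧
        s a c ∧ s b d ∧ ¬ s a b := by
  have huni : ∀ B ∈ π, ∀ i ∈ B, B = {j | s i j} := by
    intro B hB i hi
    exact (hpart.2 i).unique ⟨hB, hi⟩ ⟨hs i, s.refl i⟩
  unfold NoCrossing
  rw [not_iff_not]
  constructor
  · rintro ⟨a, b, c, d, B, C, hB, hC, hne, hab, hbc, hcd, ha, hc, hb, hd⟩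
    have key : ∀ B ∈ insert (B₀ ∩ E) {B | B ∈ π ∧ B ⊆ E}, ∃ B' ∈ π, B = B' ∩ E := by
      rintro B (rfl | ⟨h1, h2⟩)
      · exact ⟨B₀, hB₀, rfl⟩
      · exact ⟨B, h1, (Set.inter_eq_left.2 h2).symm⟩
    obtain ⟨B', hB', rfl⟩ := key B hB
    obtain ⟨C', hC', rfl⟩ := key C hC
    refine ⟨a, b, c, d, ha.2, hb.2, hc.2, hd.2, hab, hbc, hcd, ?_, ?_, ?_⟩
    · have := huni B' hB' a ha.1 ▸ hc.1; exact this
    · have := huni C' hC' b hb.1 ▸ hd.1; exact this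
    · intro h
      have h' : b ∈ B' := by rw [huni B' hB' a ha.1]; exact h
      exact hne (by rw [huni B' hB' b h', huni C' hC' b hb.1])
  · rintro ⟨a, b, c, d, ha, hb, hc, hd, hab, hbc, hcd, hac, hbd, hnab⟩
    have key : ∀ i ∈ E, {j | s i j} ∩ E ∈ insert (B₀ ∩ E) {B | B ∈ π ∧ B ⊆ E} := by
      intro i hi
      rcases hE _ (hs i) ⟨i, s.refl i, hi⟩ with h | h
      · rw [h]; exact Set.mem_insert _ _
      · right
        rw [Set.inter_eq_left.2 h]
        exact ⟨hs i, h⟩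
    refine ⟨a, b, c, d, _, _, key a ha, key b hb, ?_, hab, hbc, hcd, ⟨s.refl a, ha⟩, ⟨hac, hc⟩,
      ⟨s.refl b, hb⟩, ⟨hbd, hd⟩⟩
    intro h
    have : b ∈ {j | s a j} ∩ E := h ▸ ⟨s.refl b, hb⟩
    exact hnab this.1

lemma cyc_crossing {n : ℕ} (s : Setoid (Fin n)) (E : Set (Fin n))
    (h : ¬ ∃ a b c d : Fin n, a ∈ E ∧ b ∈ E ∧ c ∈ E ∧ d ∈ E ∧ a < b ∧ b < c ∧ c < d ∧
        s a c ∧ s b d ∧ ¬ s a b) {a b c d : Fin n} (ha : a ∈ E) (hb : b ∈ E) (hc : c ∈ E)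
    (hd : d ∈ E) (hcyc : Cyc4 a b c d) (hac : s a c) (hbd : s b d) : s a b := by
  by_contra hab
  apply h
  rcases hcyc with ⟨h1, h2, h3⟩ | ⟨h1, h2, h3⟩ | ⟨h1, h2, h3⟩ | ⟨h1, h2, h3⟩
  · exact ⟨a, b, c, d, ha, hb, hc, hd, h1, h2, h3, hac, hbd, hab⟩
  · exact ⟨b, c, d, a, hb, hc, hd, ha, h1, h2, h3, hbd, s.symm hac,
      fun h => hab (s.trans hac (s.symm h))⟩
  · exact ⟨c, d, a, b, hc, hd, ha, hb, h1, h2, h3, s.symm hac, s.symm hbd,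
      fun h => hab (s.trans hac (s.trans h (s.symm hbd)))⟩
  · exact ⟨d, a, b, c, hd, ha, hb, hc, h1, h2, h3, s.symm hbd, hac,
      fun h => hab (s.trans (s.symm h) (s.symm hbd))⟩

lemma ac1_of_crossing {p q : ℕ} (τ : Equiv.Perm (Fin (p + q))) (E : Set (Fin (p + q)))
    (hE : ∀ i ∈ E, IsNext vr E i (gammaAnn p q i)) {a b c d : Fin (p + q)}
    (ha : a ∈ E) (hb : b ∈ E) (hc : c ∈ E) (hd : d ∈ E) (hab : a < b) (hbc : b < c) (hcd : c < d)
    (hac : τ.SameCycle a c) (hbd : τ.SameCycle b d) (hnab : ¬ τ.SameCycle a b) : AC1 p q τ := by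
  have n1 := hab.ne
  have n2 := (hab.trans hbc).ne
  have n3 := (hab.trans (hbc.trans hcd)).ne
  have n4 := hbc.ne
  have n5 := (hbc.trans hcd).ne
  have n6 := hcd.ne
  refine ⟨a, b, c, d, by simp [*], ?_, ?_⟩
  · set S : Set (Fin (p + q)) := {a, b, c, d} with hS
    have hSE : S ∩ E = S := by
      apply Set.inter_eq_left.2
      rintro x (rfl | rfl | rfl | rfl) <;> assumption
    have main : ∀ u ∈ S, ∀ v, IsNext vr S u v → induced (⇑(gammaAnn p q)) S u = v := by
      intro u hu v hv
      have := induced_isNext (gammaAnn p q) vr E S (vr_inj _) hE hu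
        (Set.inter_eq_left.1 hSE hu)
      rw [hSE] at this
      exact this.unique (vr_inj _) hv
    rw [Fin.lt_def] at hab hbc hcd
    refine ⟨main a (by simp [hS]) b ?_, main b (by simp [hS]) c ?_, main c (by simp [hS]) d ?_,
      main d (by simp [hS]) a ?_⟩ <;>
    · refine ⟨by simp [hS], ?_⟩
      simp only [hS, vr, Set.mem_insert_iff, Set.mem_singleton_iff, forall_eq_or_imp, forall_eq]
      omega
  · have k1 : ∀ z ∈ ({a, b, c, d} : Set (Fin (p + q))), τ.SameCycle a z → z = a ∨ z = c := by
      rintro z (rfl | rfl | rfl | rfl) h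
      · simp
      · exact absurd h hnab
      · simp
      · exact absurd (h.trans hbd.symm) hnab
    have k2 : ∀ z ∈ ({a, b, c, d} : Set (Fin (p + q))), τ.SameCycle b z → z = b ∨ z = d := by
      rintro z (rfl | rfl | rfl | rfl) h
      · exact absurd h.symm hnab
      · simp
      · exact absurd (hac.trans h.symm) hnab
      · simp
    refine ⟨induced_pair τ (by simp) (by simp) n2 hac k1,
      induced_pair τ (by simp) (by simp) n2.symm hac.symm ?_,
      induced_pair τ (by simp) (by simp) n5 hbd k2,
      induced_pair τ (by simp) (by simp) n5.symm hbd.symm ?_⟩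
    · intro z hz h; exact (k1 z hz (hac.trans h)).symm
    · intro z hz h; exact (k2 z hz (hbd.trans h)).symm

lemma swap_not_sameCycle {α : Type*} [Finite α] (τ : Equiv.Perm α) {S : Set α} {a c b : α}
    (ha : a ∈ S) (hc : c ∈ S) (h1 : induced (⇑τ) S a = c) (h2 : induced (⇑τ) S c = a)
    (hb : b ∈ S) (hba : b ≠ a) (hbc : b ≠ c) : ¬ τ.SameCycle a b := by
  intro h
  have := induced_closure τ (S := S) (T := {a, c}) (by rintro x (rfl | rfl) <;> assumption)
    (by rintro x (rfl | rfl) <;> simp [h1, h2]) (by simp) hb h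
  simp [hba, hbc] at this

lemma annStandard_tau {p q : ℕ} (s : Setoid (Fin (p + q))) (τ : Equiv.Perm (Fin (p + q)))
    (hn : ∀ i, IsNext vr {j | s i j} i (τ i)) (hsc : ∀ i j, τ.SameCycle i j ↔ s i j) :
    AnnStandard p q τ := by
  have hA : ∀ A, IsOrbit τ A → ∀ i ∈ A, IsNext vr A i (τ i) := by
    rintro A ⟨a, rfl⟩ i hi
    have : {b | τ.SameCycle a b} = {j | s i j} := by
      ext b
      have hi' : τ.SameCycle a i := hi
      simp only [Set.mem_ofPred_eq, ← hsc]
      exact ⟨fun h => hi'.symm.trans h, fun h => hi'.trans h⟩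
    rw [this]
    exact hn i
  have gen : ∀ A, IsOrbit τ A → ∀ (E : Set (Fin (p + q))) (g : Equiv.Perm (Fin (p + q))),
      (∀ i ∈ E, IsNext vr E i (g i)) → ∀ b ∈ A ∩ E,
        induced (⇑τ) (A ∩ E) b = induced (⇑g) (A ∩ E) b := by
    intro A hO E g hg b hb
    have h1 := induced_isNext τ vr A (A ∩ E) (vr_inj _) (hA A hO) hb hb.1
    have h2 := induced_isNext g vr E (A ∩ E) (vr_inj _) hg hb hb.2
    rw [Set.inter_eq_left.2 Set.inter_subset_left] at h1
    rw [Set.inter_eq_left.2 Set.inter_subset_right] at h2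
    exact h1.unique (vr_inj _) h2
  refine ⟨fun A hO => ⟨gen A hO _ _ (gammaExt_next p q), gen A hO _ _ (gammaInt_next p q)⟩, ?_⟩
  intro A hO he hi
  have hA := hA A hO
  constructor
  · obtain ⟨m, hm, hmax⟩ := exists_max _ he
    obtain ⟨w, hwA, hw⟩ := hi
    simp only [Set.mem_inter_iff, extSet, intSet, Set.mem_ofPred_eq] at *
    refine ⟨m, ⟨hm, ?_⟩, ?_⟩
    · have f := (hA m hm.1).facts hwA
      simp only [vr] at f
      by_contra hlt
      have := hmax (τ m) ⟨(hA m hm.1).1, by omega⟩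
      rw [Fin.le_def] at this
      omega
    · rintro z ⟨⟨hz1, hz2⟩, hz3⟩
      have f := (hA z hz1).facts hm.1
      have := hmax z ⟨hz1, hz2⟩
      rw [Fin.le_def] at this
      simp only [vr] at f
      ext; omega
  · obtain ⟨m, hm, hmax⟩ := exists_max _ hi
    obtain ⟨w, hwA, hw⟩ := he
    simp only [Set.mem_inter_iff, extSet, intSet, Set.mem_ofPred_eq] at *
    refine ⟨m, ⟨hm, ?_⟩, ?_⟩
    · have f := (hA m hm.1).facts hwA
      simp only [vr] at f
      by_contra hlt
      have := hmax (τ m) ⟨(hA m hm.1).1, by omega⟩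
      rw [Fin.le_def] at this
      omega
    · rintro z ⟨⟨hz1, hz2⟩, hz3⟩
      have f := (hA z hz1).facts hm.1
      have := hmax z ⟨hz1, hz2⟩
      rw [Fin.le_def] at this
      simp only [vr] at f
      ext; omega

lemma not_ac1_tau {p q : ℕ} (s : Setoid (Fin (p + q))) (τ : Equiv.Perm (Fin (p + q)))
    (hsc : ∀ i j, τ.SameCycle i j ↔ s i j)
    (hX : ∀ E, E = extSet p q ∨ E = intSet p q → ¬ ∃ a b c d : Fin (p + q),
      a ∈ E ∧ b ∈ E ∧ c ∈ E ∧ d ∈ E ∧ a < b ∧ b < c ∧ c < d ∧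
        s a c ∧ s b d ∧ ¬ s a b) : ¬ AC1 p q τ := by
  rintro ⟨a, b, c, d, hne, ⟨g1, g2, g3, g4⟩, ⟨t1, t2, t3, t4⟩⟩
  simp only [List.pairwise_cons, List.mem_cons, List.not_mem_nil, or_false, forall_eq_or_imp,
    forall_eq, false_imp_iff, implies_true, List.Pairwise.nil, and_true] at hne
  obtain ⟨⟨n1, n2, n3⟩, ⟨n4, n5⟩, n6⟩ := hne
  set S : Set (Fin (p + q)) := {a, b, c, d} with hS
  have haS : a ∈ S := by simp [hS]
  have hbS : b ∈ S := by simp [hS]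
  have hcS : c ∈ S := by simp [hS]
  have hdS : d ∈ S := by simp [hS]
  have hac : s a c := by rw [← hsc, ← t1]; exact induced_sameCycle τ haS
  have hbd : s b d := by rw [← hsc, ← t3]; exact induced_sameCycle τ hbS
  have hnab : ¬ s a b := by
    rw [← hsc]
    exact swap_not_sameCycle τ haS hcS t1 t2 hbS n1.symm n4
  have gen : ∀ E, (E = extSet p q ∨ E = intSet p q) →
      (∀ i ∈ E, IsNext vr E i (gammaAnn p q i)) → a ∈ E → False := by
    intro E hE hg ha
    have m1 := induced_isNext (gammaAnn p q) vr E S (vr_inj _) hg haS ha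
    rw [g1] at m1
    have m2 := induced_isNext (gammaAnn p q) vr E S (vr_inj _) hg hbS m1.1.2
    rw [g2] at m2
    have m3 := induced_isNext (gammaAnn p q) vr E S (vr_inj _) hg hcS m2.1.2
    rw [g3] at m3
    have hcyc := cyc4_of (vr_inj _) (Set.mem_inter haS ha) m1.1 m2.1 m3.1 n1 n2 n3 n4 n5 n6 m1 m2 m3
    exact hnab (cyc_crossing s E (hX E hE) ha m1.1.2 m2.1.2 m3.1.2 hcyc hac hbd)
  by_cases ha : a ∈ extSet p q
  · exact gen _ (Or.inl rfl) (gammaAnn_ext p q) ha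
  · exact gen _ (Or.inr rfl) (gammaAnn_int p q) (int_of_not_ext.1 ha)

lemma not_ac2_tau {p q : ℕ} (s : Setoid (Fin (p + q))) (τ : Equiv.Perm (Fin (p + q)))
    (hn : ∀ i, IsNext vr {j | s i j} i (τ i)) (hsc : ∀ i j, τ.SameCycle i j ↔ s i j)
    (hside : ∀ x y a c, x ∈ extSet p q → y ∈ intSet p q → s x y → ¬ s x a → s a c →
      (a ∈ extSet p q ↔ c ∈ extSet p q)) : ¬ AC2 p q τ := by
  rintro ⟨a, b, c, x, y, hne, hx, hy, ⟨g1, g2, g3⟩, ⟨t1, t2, t3⟩, t4, t5⟩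
  simp only [List.pairwise_cons, List.mem_cons, List.not_mem_nil, or_false, forall_eq_or_imp,
    forall_eq, false_imp_iff, implies_true, List.Pairwise.nil, and_true] at hne
  obtain ⟨⟨n1, n2, n3, n4⟩, ⟨n5, n6, n7⟩, ⟨n8, n9⟩, n10⟩ := hne
  set S : Set (Fin (p + q)) := {a, b, c, x, y} with hS
  have haS : a ∈ S := by simp [hS]
  have hbS : b ∈ S := by simp [hS]
  have hcS : c ∈ S := by simp [hS]
  have hxS : x ∈ S := by simp [hS]
  have hyS : y ∈ S := by simp [hS]
  have hac : s a c := by rw [← hsc, ← t1]; exact induced_sameCycle τ haS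
  have hcb : s c b := by rw [← hsc, ← t2]; exact induced_sameCycle τ hcS
  have hab : s a b := s.trans hac hcb
  have hxy : s x y := by rw [← hsc, ← t4]; exact induced_sameCycle τ hxS
  have hxa : ¬ s x a := by
    rw [← hsc]
    exact swap_not_sameCycle τ hxS hyS t4 t5 haS n3 n4
  have e1 := hside x y a c hx hy hxy hxa hac
  have e2 := hside x y a b hx hy hxy hxa hab
  have hU : ∀ i ∈ {j | s a j}, IsNext vr {j | s a j} i (τ i) := by
    intro i hi
    have : {j | s a j} = {j | s i j} := by
      ext k
      exact ⟨fun h => s.trans (s.symm hi) h, fun h => s.trans hi h⟩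
    rw [this]; exact hn i
  have m1 := induced_isNext τ vr _ S (vr_inj _) hU haS (s.refl a)
  rw [t1] at m1
  have m2 := induced_isNext τ vr _ S (vr_inj _) hU hcS hac
  rw [t2] at m2
  have hc1 := cyc3_of (vr_inj _) (Set.mem_inter haS (s.refl a)) m1.1 m2.1 n2 n1 n5.symm m1 m2
  have l1 := induced_isNext (lamPerm p q x y) (lamRank p q x y) _ {a, b, c} (lamRank_inj hx hy)
    (lam_next hx hy) (b := a) (by simp) ⟨n3, n4⟩
  rw [g1] at l1
  have l2 := induced_isNext (lamPerm p q x y) (lamRank p q x y) _ {a, b, c} (lamRank_inj hx hy)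
    (lam_next hx hy) (b := b) (by simp) ⟨n6, n7⟩
  rw [g2] at l2
  have hc2 := cyc3_of ((lamRank_inj hx hy).mono Set.inter_subset_right)
    ⟨by simp, n3, n4⟩ l1.1 l2.1 n1 n2 n5 l1 l2
  simp only [extSet, intSet, Set.mem_ofPred_eq] at hx hy e1 e2
  rw [Ne, Fin.ext_iff] at n3 n4 n6 n7 n8 n9
  simp only [Cyc3, vr, lamRank, Fin.lt_def] at hc1 hc2
  by_cases ha : (a : ℕ) < p
  · have hb := e2.1 ha
    have hc := e1.1 ha
    simp only [ha, hb, hc, if_true] at hc2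
    split_ifs at hc2 <;> omega
  · have hb := fun h => ha (e2.2 h)
    have hc := fun h => ha (e1.2 h)
    simp only [ha, hb, hc, if_false] at hc2
    split_ifs at hc2 <;> omega

lemma cyc4_iff (a b c d : ℕ) : Cyc4 a b c d ↔ Cyc3 a b c ∧ Cyc3 a c d := by
  unfold Cyc4 Cyc3
  omega

lemma lamRank_ext {p q : ℕ} {x y z : Fin (p + q)} (hx : x ∈ extSet p q) (hz : z ∈ extSet p q)
    (hne : z ≠ x) : lamRank p q x y z < p - 1 ∧
      (((x : ℕ) < z ∧ lamRank p q x y z + x + 1 = z) ∨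
        ((z : ℕ) < x ∧ lamRank p q x y z + x + 1 = z + p)) := by
  simp only [extSet, Set.mem_ofPred_eq] at hx hz
  rw [Ne, Fin.ext_iff] at hne
  simp only [lamRank, hz, if_true, Fin.lt_def]
  split_ifs <;> omega

lemma lamRank_int {p q : ℕ} {x y z : Fin (p + q)} (hy : y ∈ intSet p q) (hz : z ∉ extSet p q)
    (hne : z ≠ y) : p - 1 ≤ lamRank p q x y z ∧ lamRank p q x y z < p - 1 + (q - 1) ∧
      (((y : ℕ) < z ∧ lamRank p q x y z + y + 1 = p - 1 + z) ∨
        ((z : ℕ) < y ∧ lamRank p q x y z + y + 1 = p - 1 + z + q)) := by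
  simp only [extSet, intSet, Set.mem_ofPred_eq] at hy hz
  rw [Ne, Fin.ext_iff] at hne
  simp only [lamRank, hz, if_false, Fin.lt_def]
  split_ifs <;> omega

lemma cyc3_ext {p q : ℕ} {x y a b c : Fin (p + q)} (hx : x ∈ extSet p q)
    (ha : a ∈ extSet p q) (hb : b ∈ extSet p q) (hc : c ∈ extSet p q)
    (ax : a ≠ x) (bx : b ≠ x) (cx : c ≠ x)
    (h : Cyc3 (lamRank p q x y a) (lamRank p q x y b) (lamRank p q x y c)) : Cyc3 a b c := by
  have h1 := lamRank_ext (y := y) hx ha ax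
  have h2 := lamRank_ext (y := y) hx hb bx
  have h3 := lamRank_ext (y := y) hx hc cx
  simp only [extSet, Set.mem_ofPred_eq] at *
  unfold Cyc3 at *
  omega

lemma cyc3_int {p q : ℕ} {x y a b c : Fin (p + q)} (hy : y ∈ intSet p q)
    (ha : a ∉ extSet p q) (hb : b ∉ extSet p q) (hc : c ∉ extSet p q)
    (ax : a ≠ y) (bx : b ≠ y) (cx : c ≠ y)
    (h : Cyc3 (lamRank p q x y a) (lamRank p q x y b) (lamRank p q x y c)) : Cyc3 a b c := by
  have h1 := lamRank_int (x := x) hy ha ax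
  have h2 := lamRank_int (x := x) hy hb bx
  have h3 := lamRank_int (x := x) hy hc cx
  simp only [extSet, intSet, Set.mem_ofPred_eq] at *
  unfold Cyc3 at *
  omega

lemma not_ac3_tau {p q : ℕ} (s : Setoid (Fin (p + q))) (τ : Equiv.Perm (Fin (p + q)))
    (hsc : ∀ i j, τ.SameCycle i j ↔ s i j)
    (hside : ∀ x y a c, x ∈ extSet p q → y ∈ intSet p q → s x y → ¬ s x a → s a c →
      (a ∈ extSet p q ↔ c ∈ extSet p q))
    (hX : ∀ E, E = extSet p q ∨ E = intSet p q → ¬ ∃ a b c d : Fin (p + q),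
      a ∈ E ∧ b ∈ E ∧ c ∈ E ∧ d ∈ E ∧ a < b ∧ b < c ∧ c < d ∧
        s a c ∧ s b d ∧ ¬ s a b) : ¬ AC3 p q τ := by
  rintro ⟨a, b, c, d, x, y, hne, hx, hy, ⟨g1, g2, g3, g4⟩, ⟨t1, t2, t3, t4⟩, t5, t6⟩
  simp only [List.pairwise_cons, List.mem_cons, List.not_mem_nil, or_false, forall_eq_or_imp,
    forall_eq, false_imp_iff, implies_true, List.Pairwise.nil, and_true] at hne
  obtain ⟨⟨n1, n2, n3, ax, ay⟩, ⟨n4, n5, bx, bY⟩, ⟨n6, cx, cy⟩, ⟨dx, dy⟩, xy⟩ := hne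
  set S : Set (Fin (p + q)) := {a, b, c, d, x, y} with hS
  have haS : a ∈ S := by simp [hS]
  have hbS : b ∈ S := by simp [hS]
  have hcS : c ∈ S := by simp [hS]
  have hxS : x ∈ S := by simp [hS]
  have hyS : y ∈ S := by simp [hS]
  have hac : s a c := by rw [← hsc, ← t1]; exact induced_sameCycle τ haS
  have hbd : s b d := by rw [← hsc, ← t3]; exact induced_sameCycle τ hbS
  have hxy : s x y := by rw [← hsc, ← t5]; exact induced_sameCycle τ hxS
  have hnab : ¬ s a b := by
    rw [← hsc]
    exact swap_not_sameCycle τ haS hcS t1 t2 hbS n1.symm n4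
  have hxa : ¬ s x a := by
    rw [← hsc]
    exact swap_not_sameCycle τ hxS hyS t5 t6 haS ax ay
  have hxb : ¬ s x b := by
    rw [← hsc]
    exact swap_not_sameCycle τ hxS hyS t5 t6 hbS bx bY
  have e1 := hside x y a c hx hy hxy hxa hac
  have e2 := hside x y b d hx hy hxy hxb hbd
  have l1 := induced_isNext (lamPerm p q x y) (lamRank p q x y) _ {a, b, c, d} (lamRank_inj hx hy)
    (lam_next hx hy) (b := a) (by simp) ⟨ax, ay⟩
  rw [g1] at l1
  have l2 := induced_isNext (lamPerm p q x y) (lamRank p q x y) _ {a, b, c, d} (lamRank_inj hx hy)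
    (lam_next hx hy) (b := b) (by simp) ⟨bx, bY⟩
  rw [g2] at l2
  have l3 := induced_isNext (lamPerm p q x y) (lamRank p q x y) _ {a, b, c, d} (lamRank_inj hx hy)
    (lam_next hx hy) (b := c) (by simp) ⟨cx, cy⟩
  rw [g3] at l3
  have hc2 := cyc4_of ((lamRank_inj hx hy).mono Set.inter_subset_right)
    ⟨by simp, ax, ay⟩ l1.1 l2.1 l3.1 n1 n2 n3 n4 n5 n6 l1 l2 l3
  by_cases ha : a ∈ extSet p q <;> by_cases hb : b ∈ extSet p q
  · have hc := e1.1 ha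
    have hd := e2.1 hb
    refine hnab (cyc_crossing s _ (hX _ (Or.inl rfl)) ha hb hc hd ?_ hac hbd)
    rw [cyc4_iff] at hc2 ⊢
    exact ⟨cyc3_ext hx ha hb hc ax bx cx hc2.1, cyc3_ext hx ha hc hd ax cx dx hc2.2⟩
  · have hc := e1.1 ha
    have hd := fun h => hb (e2.2 h)
    have f1 := (lamRank_ext (y := y) hx ha ax).1
    have f2 := (lamRank_int (x := x) hy hb bY).1
    have f3 := (lamRank_ext (y := y) hx hc cx).1
    have f4 := (lamRank_int (x := x) hy hd dy).1
    unfold Cyc4 at hc2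
    omega
  · have hc := fun h => ha (e1.2 h)
    have hd := e2.1 hb
    have f1 := (lamRank_int (x := x) hy ha ay).1
    have f2 := (lamRank_ext (y := y) hx hb bx).1
    have f3 := (lamRank_int (x := x) hy hc cy).1
    have f4 := (lamRank_ext (y := y) hx hd dx).1
    unfold Cyc4 at hc2
    omega
  · have hc := fun h => ha (e1.2 h)
    have hd := fun h => hb (e2.2 h)
    refine hnab (cyc_crossing s _ (hX _ (Or.inr rfl)) (int_of_not_ext.1 ha) (int_of_not_ext.1 hb)
      (int_of_not_ext.1 hc) (int_of_not_ext.1 hd) ?_ hac hbd)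
    rw [cyc4_iff] at hc2 ⊢
    exact ⟨cyc3_int hy ha hb hc ay bY cy hc2.1, cyc3_int hy ha hc hd ay cy dy hc2.2⟩

/-- Proposition 4.6 2°: let `π` be a partition of `[p+q]` with exactly one
`(p,q)`-connecting block `B₀`; write `B₀' = B₀ ∩ {1,…,p}`, `B₀'' = B₀ ∩ {p+1,…,p+q}`, and
let the remaining blocks of `π` be contained in `{1,…,p}` or in `{p+1,…,p+q}`.  Then
`π ∈ NC_ann(p,q)` iff the partition `{B₀', B₁', …, B_s'}` of `{1,…,p}` is disc
non-crossing and the partition `{B₀'', B₁'', …, B_t''}` of `{p+1,…,p+q}` is disc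
non-crossing. -/
theorem stmt_9 (p q : ℕ) (hp : 0 < p) (hq : 0 < q) (π : Set (Set (Fin (p + q))))
    (hpart : Setoid.IsPartition π) (B₀ : Set (Fin (p + q))) (hB₀ : B₀ ∈ π)
    (hconn : ConnectingBlock p q B₀)
    (huniq : ∀ B ∈ π, ConnectingBlock p q B → B = B₀) :
    (∃ τ : Equiv.Perm (Fin (p + q)), AnnNC p q τ ∧ {A | IsOrbit τ A} = π) ↔
      NoCrossing (insert (B₀ ∩ extSet p q) {B | B ∈ π ∧ B ⊆ extSet p q}) ∧
      NoCrossing (insert (B₀ ∩ intSet p q) {B | B ∈ π ∧ B ⊆ intSet p q}) := by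
  classical
  let s : Setoid (Fin (p + q)) := Setoid.mkClasses π hpart.2
  have hcl : s.classes = π := Setoid.classes_mkClasses π hpart
  have hs : ∀ i, {j | s i j} ∈ π := by
    intro i
    have : {j | s i j} = {j | s j i} := by
      ext j
      exact ⟨fun h => s.symm h, fun h => s.symm h⟩
    rw [this, ← hcl]
    exact Setoid.mem_classes s i
  have huni : ∀ B ∈ π, ∀ i ∈ B, B = {j | s i j} := by
    intro B hB i hi
    exact (hpart.2 i).unique ⟨hB, hi⟩ ⟨hs i, s.refl i⟩
  have hEe : ∀ B ∈ π, (B ∩ extSet p q).Nonempty → B = B₀ ∨ B ⊆ extSet p q := by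
    intro B hB h
    by_cases h' : B ⊆ extSet p q
    · exact Or.inr h'
    · obtain ⟨z, hz, hz'⟩ := Set.not_subset.1 h'
      exact Or.inl (huniq B hB ⟨h, z, hz, int_of_not_ext.1 hz'⟩)
  have hEi : ∀ B ∈ π, (B ∩ intSet p q).Nonempty → B = B₀ ∨ B ⊆ intSet p q := by
    intro B hB h
    by_cases h' : B ⊆ intSet p q
    · exact Or.inr h'
    · obtain ⟨z, hz, hz'⟩ := Set.not_subset.1 h'
      rw [← int_of_not_ext, not_not] at hz'
      exact Or.inl (huniq B hB ⟨⟨z, hz, hz'⟩, h⟩)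
  rw [noCrossing_iff hpart s hs B₀ _ hB₀ hEe, noCrossing_iff hpart s hs B₀ _ hB₀ hEi]
  constructor
  · rintro ⟨τ, ⟨-, hac1, -, -⟩, hτ⟩
    have hsc : ∀ i j, τ.SameCycle i j ↔ s i j := by
      intro i j
      have h1 : {b | τ.SameCycle i b} ∈ π := by
        rw [← hτ]; exact ⟨i, rfl⟩
      have h2 := huni _ h1 i (Equiv.Perm.SameCycle.refl _ _)
      exact Set.ext_iff.1 h2 j
    constructor
    · rintro ⟨a, b, c, d, ha, hb, hc, hd, h1, h2, h3, h4, h5, h6⟩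
      rw [← hsc] at h4 h5 h6
      exact hac1 (ac1_of_crossing τ _ (gammaAnn_ext p q) ha hb hc hd h1 h2 h3 h4 h5 h6)
    · rintro ⟨a, b, c, d, ha, hb, hc, hd, h1, h2, h3, h4, h5, h6⟩
      rw [← hsc] at h4 h5 h6
      exact hac1 (ac1_of_crossing τ _ (gammaAnn_int p q) ha hb hc hd h1 h2 h3 h4 h5 h6)
  · rintro ⟨hne, hni⟩
    obtain ⟨τ, hn, hsc⟩ := exists_tau s
    have hX : ∀ E, E = extSet p q ∨ E = intSet p q → ¬ ∃ a b c d : Fin (p + q),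
      a ∈ E ∧ b ∈ E ∧ c ∈ E ∧ d ∈ E ∧ a < b ∧ b < c ∧ c < d ∧
        s a c ∧ s b d ∧ ¬ s a b := by
      rintro E (rfl | rfl)
      · exact hne
      · exact hni
    have hside : ∀ x y a c, x ∈ extSet p q → y ∈ intSet p q → s x y → ¬ s x a → s a c →
        (a ∈ extSet p q ↔ c ∈ extSet p q) := by
      intro x y a c hx hy hxy hxa hac
      have h1 : {j | s x j} = B₀ := huniq _ (hs x) ⟨⟨x, s.refl x, hx⟩, ⟨y, hxy, hy⟩⟩
      by_contra hcon
      have h2 : {j | s a j} = B₀ := by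
        apply huniq _ (hs a)
        by_cases ha : a ∈ extSet p q
        · have hc : c ∉ extSet p q := fun h => hcon ⟨fun _ => h, fun _ => ha⟩
          exact ⟨⟨a, s.refl a, ha⟩, ⟨c, hac, int_of_not_ext.1 hc⟩⟩
        · have hc : c ∈ extSet p q := by
            by_contra h
            exact hcon ⟨fun h' => absurd h' ha, fun h' => absurd h' h⟩
          exact ⟨⟨c, hac, hc⟩, ⟨a, s.refl a, int_of_not_ext.1 ha⟩⟩
      have : a ∈ {j | s x j} := by
        rw [h1, ← h2]; exact s.refl a
      exact hxa this
    refine ⟨τ, ⟨annStandard_tau s τ hn hsc, not_ac1_tau s τ hsc hX,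
      not_ac2_tau s τ hn hsc hside, not_ac3_tau s τ hsc hside hX⟩, ?_⟩
    ext A
    constructor
    · rintro ⟨a, rfl⟩
      simp only [hsc]
      exact hs a
    · intro hA
      obtain ⟨a, ha⟩ : A.Nonempty := by
        rw [Set.nonempty_iff_ne_empty]
        rintro rfl
        exact hpart.1 hA
      refine ⟨a, ?_⟩
      simp only [hsc]
      exact huni A hA a ha
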